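/- (Taylor expansion of the phase) With the zero-drift mostly symmetric setup, the function θ ↦ log S̄(e^{iθ_1},…,e^{iθ_d}) (principal branch) satisfies, as θ → 0 in ℝ^d, log S̄(e^{iθ}) = log S(1) − Σ_{j=1}^d (b_j / S(1)) θ_j^2 + O((|θ_1| + ··· + |θ_d|)^3). -/

import Mathlib

open Finset Filter MeasureTheory
open scoped Classical Real

noncomputable section

/-- Total weight of walks of length `n` with steps in `S` (weighted by `w`),
starting at the origin and never leaving `ℕ^d`. -/
def walkWeight (d : ℕ) (S : Finset (Fin d → ℤ)) (w : (Fin d → ℤ) → ℝ) (n : ℕ) : ℝ :=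
  ∑ f : Fin n → {i // i ∈ S},
    if ∀ m : ℕ, m ≤ n → ∀ j : Fin d,
        0 ≤ ∑ k ∈ Finset.univ.filter (fun k : Fin n => (k : ℕ) < m), ((f k : Fin d → ℤ) j)
    then ∏ k : Fin n, w (f k) else 0

/-- The step set `S` (with weights `w`) is symmetric over the `k`-th coordinate axis. -/
def SymmetricAxis (d : ℕ) (S : Finset (Fin d → ℤ)) (w : (Fin d → ℤ) → ℝ) (k : Fin d) : Prop :=
  ∀ i ∈ S, Function.update i k (-(i k)) ∈ S ∧ w (Function.update i k (-(i k))) = w i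

namespace ZeroDrift

variable (d : ℕ) (S : Finset (Fin (d + 1) → ℤ)) (w : (Fin (d + 1) → ℤ) → ℝ)

/-- `S(1)`, the total weight of the step set. -/
def S1 : ℝ := ∑ i ∈ S, w i

/-- `A(ẑ)`: the Laurent polynomial collecting steps with last coordinate `-1`. -/
def AC (z : Fin (d + 1) → ℂ) : ℂ :=
  ∑ i ∈ S.filter fun i => i (Fin.last d) = -1,
    (w i : ℂ) * ∏ j : Fin d, z (Fin.castSucc j) ^ (i (Fin.castSucc j))

/-- `B(ẑ)`: the Laurent polynomial collecting steps with last coordinate `1`. -/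
def BC (z : Fin (d + 1) → ℂ) : ℂ :=
  ∑ i ∈ S.filter fun i => i (Fin.last d) = 1,
    (w i : ℂ) * ∏ j : Fin d, z (Fin.castSucc j) ^ (i (Fin.castSucc j))

/-- `Q(ẑ)`: the Laurent polynomial collecting steps with last coordinate `0`. -/
def QC (z : Fin (d + 1) → ℂ) : ℂ :=
  ∑ i ∈ S.filter fun i => i (Fin.last d) = 0,
    (w i : ℂ) * ∏ j : Fin d, z (Fin.castSucc j) ^ (i (Fin.castSucc j))

/-- The characteristic Laurent polynomial `S(z)` evaluated at `z : ℂ^{d+1}`. -/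
def SC (z : Fin (d + 1) → ℂ) : ℂ :=
  ∑ i ∈ S, (w i : ℂ) * ∏ j : Fin (d + 1), z j ^ (i j)

/-- `S̄(z) = S(z_1,…,z_{d},1/z_{d+1})` evaluated at `z : ℂ^{d+1}`. -/
def SbarC (z : Fin (d + 1) → ℂ) : ℂ :=
  ∑ i ∈ S, (w i : ℂ) *
    (∏ j : Fin d, z (Fin.castSucc j) ^ (i (Fin.castSucc j))) *
    z (Fin.last d) ^ (-(i (Fin.last d)))

/-- The numerator `G(z,t)` of the diagonal representation. -/
def GC (z : Fin (d + 1) → ℂ) (t : ℂ) : ℂ :=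
  (∏ j : Fin d, (1 + z (Fin.castSucc j))) *
    (1 - t * (∏ j, z j) * (QC d S w z + 2 * z (Fin.last d) * AC d S w z))

/-- The denominator `H(z,t) = H_1 H_2 H_3` of the diagonal representation. -/
def HC (z : Fin (d + 1) → ℂ) (t : ℂ) : ℂ :=
  (1 - z (Fin.last d)) * (1 - t * (∏ j, z j) * SbarC d S w z) *
    (1 - t * (∏ j, z j) * (QC d S w z + z (Fin.last d) * AC d S w z))

/-- The point of `ℂ^{d+1}` with coordinates `i^{m_j}` encoded by `m : Fin (d+1) → Fin 4`. -/
def wOf (m : Fin (d + 1) → Fin 4) : Fin (d + 1) → ℂ :=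
  fun j => Complex.I ^ (m j : ℕ)

/-- The (indices of the) finite set `Γ` of possible contributing points: `w_j ∈ {±1}` for
`j ≤ d`, `w_{d+1} ∈ {±1,±i}`, and `|1/(w_1⋯w_{d+1} S(w))| = 1/S(1)`. -/
def GammaIdx : Finset (Fin (d + 1) → Fin 4) :=
  Finset.univ.filter fun m =>
    (∀ j : Fin d, m (Fin.castSucc j) = 0 ∨ m (Fin.castSucc j) = 2) ∧
    ‖(1 / ((∏ j, wOf d m j) * SC d S w (wOf d m)) : ℂ)‖ = 1 / S1 d S w

/-- The argument (angle) of the point encoded by `m` in coordinate `j`. -/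
def argOf (m : Fin (d + 1) → Fin 4) (j : Fin (d + 1)) : ℝ := (m j : ℕ) * π / 2

/-- The box of angles parametrizing the product of arcs `N_w` for `w = wOf m`. -/
def box (m : Fin (d + 1) → Fin 4) (δ : ℝ) : Set (Fin (d + 1) → ℝ) :=
  Set.univ.pi fun j => Set.Ioo (argOf d m j - δ) (argOf d m j + δ)

/-- The parametrization of the torus `|z_j| = 1` (`j ≤ d`), `|z_{d+1}| = 1 - ε`. -/
def zOf (ε : ℝ) (θ : Fin (d + 1) → ℝ) : Fin (d + 1) → ℂ :=
  fun j => (if j = Fin.last d then (1 - ε : ℂ) else 1) * Complex.exp (Complex.I * θ j)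

/-- Angles parametrizing `N = ⋃_{w ∈ Γ} N_w`. -/
def Nparam (δ : ℝ) : Set (Fin (d + 1) → ℝ) := ⋃ m ∈ GammaIdx d S w, box d m δ

/-- The contour integral `(2πi)^{-(d+2)} ∫_{N × C} G/H · dz dt/(z_1⋯z_{d+1}t)^{n+1}`,
parametrized by angles, where `C` is the circle `|t| = r`. -/
def fullIntegral (n : ℕ) (ε δ r : ℝ) : ℂ :=
  (((2 * π) ^ (d + 2) : ℝ))⁻¹ •
    ∫ θ in Nparam d S w δ,
      ∫ φ in Set.Ioo 0 (2 * π),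
        GC d S w (zOf d ε θ) ((r : ℂ) * Complex.exp (Complex.I * φ)) /
            HC d S w (zOf d ε θ) ((r : ℂ) * Complex.exp (Complex.I * φ)) *
          (((∏ j, zOf d ε θ j) * ((r : ℂ) * Complex.exp (Complex.I * φ))) ^ n)⁻¹

/-- The residue integrand
`[(1+z_1)⋯(1+z_d)/(B(ẑ) z_1⋯z_{d+1})]·[(B(ẑ) - z_{d+1}^2 A(ẑ))/(1-z_{d+1})]·S̄(z)^n`,
parametrized by angles, including the Jacobian factors `i z_j` of `dz_j`. -/
def resIntegrand (n : ℕ) (ε : ℝ) (θ : Fin (d + 1) → ℝ) : ℂ :=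
  ((∏ j : Fin d, (1 + zOf d ε θ (Fin.castSucc j))) /
      (BC d S w (zOf d ε θ) * ∏ j, zOf d ε θ j)) *
    ((BC d S w (zOf d ε θ) - zOf d ε θ (Fin.last d) ^ 2 * AC d S w (zOf d ε θ)) /
      (1 - zOf d ε θ (Fin.last d))) *
    SbarC d S w (zOf d ε θ) ^ n *
    ∏ j, Complex.I * zOf d ε θ j

/-- The contour integral `∫_{N_w} (residue integrand) dz` over the product of arcs `N_w`,
`w = wOf m`, parametrized by angles. -/
def resIntegral (n : ℕ) (ε δ : ℝ) (m : Fin (d + 1) → Fin 4) : ℂ :=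
  ∫ θ in box d m δ, resIntegrand d S w n ε θ

end ZeroDrift


/-- A weighted sum of a function that is odd under a symmetry axis vanishes. -/
lemma SymmetricAxis.sum_eq_zero {d : ℕ} {S : Finset (Fin d → ℤ)} {w : (Fin d → ℤ) → ℝ}
    {k : Fin d} (h : SymmetricAxis d S w k) (f : (Fin d → ℤ) → ℝ)
    (hf : ∀ i, f (Function.update i k (-(i k))) = -f i) :
    ∑ i ∈ S, w i * f i = 0 := by
  have key : ∑ i ∈ S, w i * f i = ∑ i ∈ S, -(w i * f i) := by
    refine Finset.sum_nbij' (fun i => Function.update i k (-(i k)))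
      (fun i => Function.update i k (-(i k))) (fun i hi => (h i hi).1)
      (fun i hi => (h i hi).1) (by simp) (by simp) ?_
    intro i hi
    rw [(h i hi).2, hf]
    ring
  rw [Finset.sum_neg_distrib] at key
  linarith

namespace ZeroDrift

variable {d : ℕ} {S : Finset (Fin (d + 1) → ℤ)} {w : (Fin (d + 1) → ℤ) → ℝ}

/-- The weighted first moments of a zero-drift mostly symmetric step set vanish. -/
lemma sum_weight_mul_coord_eq_zero
    (hstep : ∀ i ∈ S, ∀ j, i j = -1 ∨ i j = 0 ∨ i j = 1)
    (hsym : ∀ k : Fin d, SymmetricAxis (d + 1) S w (Fin.castSucc k))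
    (hzero : (∑ i ∈ S.filter fun i => i (Fin.last d) = -1, w i)
        = ∑ i ∈ S.filter fun i => i (Fin.last d) = 1, w i) (j : Fin (d + 1)) :
    ∑ i ∈ S, w i * (i j : ℝ) = 0 := by
  induction j using Fin.lastCases with
  | last =>
    rw [Finset.sum_filter, Finset.sum_filter, ← sub_eq_zero, ← Finset.sum_sub_distrib] at hzero
    rw [← neg_eq_zero, ← Finset.sum_neg_distrib, ← hzero]
    refine Finset.sum_congr rfl fun i hi => ?_
    rcases hstep i hi (Fin.last d) with h | h | h <;> simp [h]
  | cast k => exact (hsym k).sum_eq_zero (fun i => (i k.castSucc : ℝ)) (by simp)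

/-- The weighted mixed second moments of a mostly symmetric step set vanish. -/
lemma sum_weight_mul_coord_mul_coord_eq_zero
    (hsym : ∀ k : Fin d, SymmetricAxis (d + 1) S w (Fin.castSucc k))
    {j k : Fin (d + 1)} (hjk : j ≠ k) :
    ∑ i ∈ S, w i * ((i j : ℝ) * i k) = 0 := by
  induction j using Fin.lastCases with
  | last =>
    induction k using Fin.lastCases with
    | last => exact absurd rfl hjk
    | cast k =>
      exact (hsym k).sum_eq_zero (fun i => (i (Fin.last d) : ℝ) * i k.castSucc)
        (by simp [Function.update_of_ne hjk])
  | cast j =>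
    exact (hsym j).sum_eq_zero (fun i => (i j.castSucc : ℝ) * i k)
      (by simp [Function.update_of_ne hjk.symm])

/-- The weighted second moment of a coordinate is twice its forward weight. -/
lemma sum_weight_mul_coord_sq
    (hstep : ∀ i ∈ S, ∀ j, i j = -1 ∨ i j = 0 ∨ i j = 1)
    (hsym : ∀ k : Fin d, SymmetricAxis (d + 1) S w (Fin.castSucc k))
    (hzero : (∑ i ∈ S.filter fun i => i (Fin.last d) = -1, w i)
        = ∑ i ∈ S.filter fun i => i (Fin.last d) = 1, w i) (j : Fin (d + 1)) :
    ∑ i ∈ S, w i * ((i j : ℝ) * i j) = 2 * ∑ i ∈ S.filter fun i => i j = 1, w i := by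
  rw [← sub_zero (2 * _), ← sum_weight_mul_coord_eq_zero hstep hsym hzero j,
    Finset.sum_filter, Finset.mul_sum, ← Finset.sum_sub_distrib]
  refine Finset.sum_congr rfl fun i hi => ?_
  rcases hstep i hi j with h | h | h <;> norm_num [h]
  ring

/-- The weighted second moment of the linear form with coefficients `φ`. -/
lemma sum_weight_mul_linear_sq
    (hstep : ∀ i ∈ S, ∀ j, i j = -1 ∨ i j = 0 ∨ i j = 1)
    (hsym : ∀ k : Fin d, SymmetricAxis (d + 1) S w (Fin.castSucc k))
    (hzero : (∑ i ∈ S.filter fun i => i (Fin.last d) = -1, w i)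
        = ∑ i ∈ S.filter fun i => i (Fin.last d) = 1, w i) (φ : Fin (d + 1) → ℝ) :
    ∑ i ∈ S, w i * (∑ j, (i j : ℝ) * φ j) ^ 2
      = 2 * ∑ j, (∑ i ∈ S.filter fun i => i j = 1, w i) * φ j ^ 2 := by
  calc ∑ i ∈ S, w i * (∑ j, (i j : ℝ) * φ j) ^ 2
      = ∑ i ∈ S, ∑ j, ∑ k, φ j * φ k * (w i * ((i j : ℝ) * i k)) := by
        refine Finset.sum_congr rfl fun i _ => ?_
        rw [sq, Finset.sum_mul_sum, Finset.mul_sum]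
        refine Finset.sum_congr rfl fun j _ => ?_
        rw [Finset.mul_sum]
        exact Finset.sum_congr rfl fun k _ => by ring
    _ = ∑ j, ∑ k, φ j * φ k * ∑ i ∈ S, w i * ((i j : ℝ) * i k) := by
        rw [Finset.sum_comm]
        refine Finset.sum_congr rfl fun j _ => ?_
        rw [Finset.sum_comm]
        exact Finset.sum_congr rfl fun k _ => (Finset.mul_sum _ _ _).symm
    _ = 2 * ∑ j, (∑ i ∈ S.filter fun i => i j = 1, w i) * φ j ^ 2 := by
        rw [Finset.mul_sum]
        refine Finset.sum_congr rfl fun j _ => ?_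
        rw [Finset.sum_eq_single j, sum_weight_mul_coord_sq hstep hsym hzero]
        · ring
        · intro k _ hk
          rw [sum_weight_mul_coord_mul_coord_eq_zero hsym hk.symm, mul_zero]
        · simp

/-- The weighted first moment of the linear form with coefficients `φ`. -/
lemma sum_weight_mul_linear
    (hstep : ∀ i ∈ S, ∀ j, i j = -1 ∨ i j = 0 ∨ i j = 1)
    (hsym : ∀ k : Fin d, SymmetricAxis (d + 1) S w (Fin.castSucc k))
    (hzero : (∑ i ∈ S.filter fun i => i (Fin.last d) = -1, w i)
        = ∑ i ∈ S.filter fun i => i (Fin.last d) = 1, w i) (φ : Fin (d + 1) → ℝ) :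
    ∑ i ∈ S, w i * ∑ j, (i j : ℝ) * φ j = 0 := by
  simp_rw [Finset.mul_sum]
  rw [Finset.sum_comm]
  refine Finset.sum_eq_zero fun j _ => ?_
  simp_rw [← mul_assoc]
  rw [← Finset.sum_mul, sum_weight_mul_coord_eq_zero hstep hsym hzero, zero_mul]

/-- On the unit torus, `S̄` is an exponential sum. -/
lemma SbarC_exp (θ : Fin (d + 1) → ℝ) :
    SbarC d S w (fun j => Complex.exp (Complex.I * θ j))
      = ∑ i ∈ S, (w i : ℂ) * Complex.exp (Complex.I *
          ((∑ j, (i j : ℝ) * (Fin.snoc (fun k : Fin d => θ k.castSucc) (-θ (Fin.last d)) :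
            Fin (d + 1) → ℝ) j : ℝ) : ℂ)) := by
  refine Finset.sum_congr rfl fun i _ => ?_
  rw [mul_assoc, Fin.sum_univ_castSucc]
  simp only [← Complex.exp_int_mul, ← Complex.exp_sum, ← Complex.exp_add, Fin.snoc_castSucc,
    Fin.snoc_last]
  push_cast
  rw [mul_add, Finset.mul_sum]
  congr 3
  · exact Finset.sum_congr rfl fun j _ => by ring
  · ring

/-- Second-order Taylor bound for the complex exponential on the imaginary axis. -/
lemma norm_exp_I_mul_sub_le {x : ℝ} (hx : |x| ≤ 1) :
    ‖Complex.exp (Complex.I * x) - (1 + Complex.I * x - (x : ℂ) ^ 2 / 2)‖ ≤ |x| ^ 3 := by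
  have h := Complex.exp_bound (x := Complex.I * x) (by simpa using hx) (n := 3) (by norm_num)
  have hsum : ∑ m ∈ Finset.range 3, (Complex.I * x) ^ m / (m.factorial : ℂ)
      = 1 + Complex.I * x - (x : ℂ) ^ 2 / 2 := by
    simp [Finset.sum_range_succ, mul_pow]
    ring
  rw [hsum] at h
  refine h.trans ?_
  have : 0 ≤ |x| ^ 3 := by positivity
  simp [Nat.factorial]
  linarith

/-- Second-order expansion of `S̄` on the unit torus. -/
lemma norm_SbarC_exp_sub_le
    (hstep : ∀ i ∈ S, ∀ j, i j = -1 ∨ i j = 0 ∨ i j = 1)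
    (hw : ∀ i ∈ S, 0 < w i)
    (hsym : ∀ k : Fin d, SymmetricAxis (d + 1) S w (Fin.castSucc k))
    (hzero : (∑ i ∈ S.filter fun i => i (Fin.last d) = -1, w i)
        = ∑ i ∈ S.filter fun i => i (Fin.last d) = 1, w i)
    (θ : Fin (d + 1) → ℝ) (hθ : ∑ j, |θ j| ≤ 1) :
    ‖SbarC d S w (fun j => Complex.exp (Complex.I * θ j)) -
        ((S1 d S w - ∑ j, (∑ i ∈ S.filter fun i => i j = 1, w i) * θ j ^ 2 : ℝ) : ℂ)‖
      ≤ S1 d S w * (∑ j, |θ j|) ^ 3 := by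
  set φ : Fin (d + 1) → ℝ := Fin.snoc (fun k : Fin d => θ k.castSucc) (-θ (Fin.last d)) with hφ
  have habs : ∀ j, |φ j| = |θ j| := by
    intro j
    induction j using Fin.lastCases <;> simp [hφ]
  have hsq : ∀ j, φ j ^ 2 = θ j ^ 2 := fun j => by rw [← sq_abs, habs, sq_abs]
  have hx : ∀ i ∈ S, |∑ j, (i j : ℝ) * φ j| ≤ ∑ j, |θ j| := by
    intro i hi
    refine (Finset.abs_sum_le_sum_abs _ _).trans (Finset.sum_le_sum fun j _ => ?_)
    rw [abs_mul, habs]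
    rcases hstep i hi j with h | h | h <;> simp [h]
  have hmain : ((S1 d S w - ∑ j, (∑ i ∈ S.filter fun i => i j = 1, w i) * θ j ^ 2 : ℝ) : ℂ)
      = ∑ i ∈ S, (w i : ℂ) * (1 + Complex.I * ((∑ j, (i j : ℝ) * φ j : ℝ) : ℂ)
          - ((∑ j, (i j : ℝ) * φ j : ℝ) : ℂ) ^ 2 / 2) := by
    have h1 := sum_weight_mul_linear hstep hsym hzero φ
    have h2 := sum_weight_mul_linear_sq hstep hsym hzero φ
    simp only [hsq] at h2
    have hsplit : ∀ x : (Fin (d + 1) → ℤ) → ℝ,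
        ∑ i ∈ S, (w i : ℂ) * (1 + Complex.I * (x i : ℂ) - (x i : ℂ) ^ 2 / 2)
          = ((∑ i ∈ S, w i : ℝ) : ℂ) + Complex.I * ((∑ i ∈ S, w i * x i : ℝ) : ℂ)
            - ((∑ i ∈ S, w i * x i ^ 2 : ℝ) : ℂ) / 2 := by
      intro x
      push_cast
      rw [Finset.mul_sum, Finset.sum_div, ← Finset.sum_add_distrib, ← Finset.sum_sub_distrib]
      exact Finset.sum_congr rfl fun i _ => by ring
    rw [hsplit (fun i => ∑ j, (i j : ℝ) * φ j), h1, h2, S1]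
    push_cast
    ring
  rw [hmain, SbarC_exp, ← Finset.sum_sub_distrib, S1, Finset.sum_mul]
  refine (norm_sum_le _ _).trans (Finset.sum_le_sum fun i hi => ?_)
  rw [← mul_sub, norm_mul, Complex.norm_real, Real.norm_of_nonneg (hw i hi).le]
  refine mul_le_mul_of_nonneg_left ?_ (hw i hi).le
  refine (norm_exp_I_mul_sub_le ((hx i hi).trans hθ)).trans ?_
  exact pow_le_pow_left₀ (abs_nonneg _) (hx i hi) 3

end ZeroDrift

/-- Taylor expansion of the phase: as `θ → 0`,
`log S̄(e^{iθ}) = log S(1) - Σ_j (b_j/S(1)) θ_j² + O((|θ_1|+⋯+|θ_{d+1}|)³)`. -/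
theorem phase_expansion
    (d : ℕ) (S : Finset (Fin (d + 1) → ℤ)) (w : (Fin (d + 1) → ℤ) → ℝ)
    (hstep : ∀ i ∈ S, (∀ j, i j = -1 ∨ i j = 0 ∨ i j = 1) ∧ i ≠ 0)
    (hw : ∀ i ∈ S, 0 < w i)
    (hsym : ∀ k : Fin d, SymmetricAxis (d + 1) S w (Fin.castSucc k))
    (hfwd : ∀ k : Fin (d + 1), ∃ i ∈ S, i k = 1)
    (hbwd : ∀ k : Fin (d + 1), ∃ i ∈ S, i k = -1)
    (hzero : (∑ i ∈ S.filter fun i => i (Fin.last d) = -1, w i)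
        = ∑ i ∈ S.filter fun i => i (Fin.last d) = 1, w i)
    :
    ∃ C r : ℝ, 0 < C ∧ 0 < r ∧
      ∀ θ : Fin (d + 1) → ℝ, (∀ j, |θ j| < r) →
        ‖Complex.log (ZeroDrift.SbarC d S w (fun j => Complex.exp (Complex.I * θ j))) -
            ((Real.log (ZeroDrift.S1 d S w) : ℂ) -
              ∑ j : Fin (d + 1),
                (((∑ i ∈ S.filter fun i => i j = 1, w i) / ZeroDrift.S1 d S w : ℝ) : ℂ) *
                  (θ j : ℂ) ^ 2)‖
          ≤ C * (∑ j : Fin (d + 1), |θ j|) ^ 3 := by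
  have hst : ∀ i ∈ S, ∀ j, i j = -1 ∨ i j = 0 ∨ i j = 1 := fun i hi => (hstep i hi).1
  have hS : 0 < ZeroDrift.S1 d S w := by
    obtain ⟨i, hi, -⟩ := hfwd 0
    exact Finset.sum_pos hw ⟨i, hi⟩
  refine ⟨2, 1 / (4 * (d + 1)), by norm_num, by positivity, fun θ hθ => ?_⟩
  have hT : ∑ j, |θ j| ≤ 1 / 4 := by
    refine (Finset.sum_le_sum fun j _ => (hθ j).le).trans_eq ?_
    simp
    field_simp
  have hT0 : 0 ≤ ∑ j, |θ j| := Finset.sum_nonneg fun j _ => abs_nonneg _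
  have hexp := ZeroDrift.norm_SbarC_exp_sub_le hst hw hsym hzero θ (by linarith)
  set F := ZeroDrift.SbarC d S w (fun j => Complex.exp (Complex.I * θ j))
  set s := ZeroDrift.S1 d S w
  set q : ℝ := ∑ j, ((∑ i ∈ S.filter fun i => i j = 1, w i) / s) * θ j ^ 2 with hq
  have hq0 : 0 ≤ q := by
    refine Finset.sum_nonneg fun j _ => mul_nonneg (div_nonneg ?_ hS.le) (sq_nonneg _)
    exact Finset.sum_nonneg fun i hi => (hw i (Finset.mem_of_mem_filter i hi)).le
  have hqT : q ≤ (∑ j, |θ j|) ^ 2 := by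
    calc q ≤ ∑ j, |θ j| ^ 2 := by
          refine Finset.sum_le_sum fun j _ => ?_
          rw [sq_abs]
          refine mul_le_of_le_one_left (sq_nonneg _) ((div_le_one hS).2 ?_)
          exact Finset.sum_le_sum_of_subset_of_nonneg (Finset.filter_subset _ _)
            fun i hi _ => (hw i hi).le
      _ ≤ (∑ j, |θ j|) ^ 2 := Finset.sum_sq_le_sq_sum_of_nonneg fun j _ => abs_nonneg _
  have hsq : ∑ j, (∑ i ∈ S.filter fun i => i j = 1, w i) * θ j ^ 2 = s * q := by
    rw [hq, Finset.mul_sum]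
    exact Finset.sum_congr rfl fun j _ => by field_simp
  have hqC : ∑ j : Fin (d + 1),
      (((∑ i ∈ S.filter fun i => i j = 1, w i) / s : ℝ) : ℂ) * (θ j : ℂ) ^ 2 = (q : ℂ) := by
    simp only [hq, Complex.ofReal_sum, Complex.ofReal_mul, Complex.ofReal_pow]
  rw [hsq] at hexp
  rw [hqC]
  generalize ∑ j, |θ j| = T at *
  have hsC : (s : ℂ) ≠ 0 := Complex.ofReal_ne_zero.2 hS.ne'
  obtain ⟨u, hu⟩ : ∃ u : ℂ, F = s * (1 + u) := ⟨F / s - 1, by field_simp; ring⟩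
  have hρ : ‖u + q‖ ≤ T ^ 3 := by
    have : F - ((s - s * q : ℝ) : ℂ) = s * (u + q) := by
      rw [hu]; push_cast; ring
    rw [this, norm_mul, Complex.norm_real, Real.norm_of_nonneg hS.le] at hexp
    exact le_of_mul_le_mul_left hexp hS
  have hu2 : ‖u‖ ≤ 2 * T ^ 2 := by
    have h : ‖u‖ ≤ ‖u + q‖ + ‖(q : ℂ)‖ := by
      simpa using norm_sub_le (u + q) (q : ℂ)
    rw [Complex.norm_real, Real.norm_of_nonneg hq0] at h
    nlinarith [sq_nonneg T]
  have huhalf : ‖u‖ ≤ 1 / 2 := by nlinarith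
  have hne : 1 + u ≠ 0 := by
    intro h
    have : u = -1 := by linear_combination h
    rw [this] at huhalf
    norm_num at huhalf
  have hlog : ‖Complex.log (1 + u) - u‖ ≤ T ^ 3 := by
    refine (Complex.norm_log_one_add_sub_self_le (by linarith)).trans ?_
    have hinv : (1 - ‖u‖)⁻¹ ≤ 2 := by
      rw [inv_le_comm₀ (by linarith) (by norm_num)]; linarith
    calc ‖u‖ ^ 2 * (1 - ‖u‖)⁻¹ / 2 ≤ ‖u‖ ^ 2 * 2 / 2 := by gcongr
      _ = ‖u‖ ^ 2 := by ring
      _ ≤ (2 * T ^ 2) ^ 2 := by gcongr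
      _ = 4 * T * T ^ 3 := by ring
      _ ≤ 1 * T ^ 3 := by gcongr; linarith
      _ = T ^ 3 := one_mul _
  rw [hu, Complex.log_ofReal_mul hS hne]
  calc ‖(Real.log s : ℂ) + Complex.log (1 + u) - ((Real.log s : ℂ) - q)‖
      = ‖(Complex.log (1 + u) - u) + (u + q)‖ := by congr 1; ring
    _ ≤ T ^ 3 + T ^ 3 := (norm_add_le _ _).trans (add_le_add hlog hρ)
    _ = 2 * T ^ 3 := by ring

end
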